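/- Let M be a finite set with |M| ≥ 32, let c ≥ 1 be a real number, and let I be a finite identifier set with |I| = ⌊|M|^c⌋. Let S be a finite nonempty set of finite sequences of elements of M, and let L and l be positive integers with L ≤ 2·|M|^c and l ≥ 150·c·ln|M| / ln ln|M|. Thenics for k = ⌈16·(ln|S| + (c+1)·ln|M|) / ln(l)⌉ there exist (deterministic) functions g_1, …, g_k : S × I → {0,…,L−1} such that the family (g_1, …, g_k) is (L,l)-good for S; that is, for every S-supported job set J over (S, I) with L ≥ C(J) + D(J), at least one induced function h_i : J → {0,…,L−1} is (L,l)-good for J. -/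

import Mathlib

open Finset

/-- The congestion of the job set `J` (a finite set of job indices of type `ι`, each job
`j` carrying the machine sequence `seq j`): the maximum over machines `m` of the total
number of pairs `(j,i)` with `j ∈ J` and `seq(j)_i = m`. -/
def congestionOn {M ι : Type*} [Fintype M] [DecidableEq M]
    (J : Finset ι) (seq : ι → List M) : ℕ :=
  Finset.univ.sup fun m : M => ∑ j ∈ J, (seq j).count m

/-- The dilation of the job set `J`: the maximum length of a job's machine sequence. -/
def dilationOn {M ι : Type*} (J : Finset ι) (seq : ι → List M) : ℕ :=
  J.sup fun j => (seq j).length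

/-- A bad pattern for the job set `J` (a finite set of job indices of type `ι`) with
machine sequences `seq` and parameters `L`, `l`. -/
def IsBadPatternOn {M ι : Type*} [Fintype M] (J : Finset ι) (seq : ι → List M)
    (L l : ℕ) (B : Fin (2 * L) → M → Finset (ι × ℕ)) : Prop :=
  (∀ T m, ∀ p ∈ B T m, p.1 ∈ J ∧ (seq p.1)[p.2]? = some m) ∧
  (∀ T m T' m', ∀ p ∈ B T m, ∀ p' ∈ B T' m', p.1 = p'.1 → T = T' ∧ m = m' ∧ p = p') ∧
  (∀ T m, B T m = ∅ ∨ l < (B T m).card) ∧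
  J.card < 2 * ∑ T, ∑ m, (B T m).card

/-- The bad pattern `B` occurs for `h` if `h(j) + i = T` for all `T`, `m`, `(j,i) ∈ B T m`. -/
def PatternOccursOn {M ι : Type*} [Fintype M]
    {L : ℕ} (B : Fin (2 * L) → M → Finset (ι × ℕ)) (h : ι → Fin L) : Prop :=
  ∀ T m, ∀ p ∈ B T m, (h p.1 : ℕ) + p.2 = (T : ℕ)

/-- `h` is `(L,l)`-good for the job set `J` if no bad pattern for `(J, L, l)` occurs for `h`. -/
def IsGoodHashOn {M ι : Type*} [Fintype M] (J : Finset ι) (seq : ι → List M)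
    (L l : ℕ) (h : ι → Fin L) : Prop :=
  ∀ B : Fin (2 * L) → M → Finset (ι × ℕ), IsBadPatternOn J seq L l B → ¬ PatternOccursOn B h

/-- The family `g : Fin k → (↥S × I → Fin L)` is `(L,l)`-good for the domain set `S`:
for every `S`-supported job set `J` (a finite set of (sequence ∈ S, identifier) pairs with
pairwise distinct identifiers, i.e. injective identifier map) with `L ≥ C(J) + D(J)`, at
least one induced hash function `h_i = g i` is `(L,l)`-good for `J`. -/
def IsGoodFamily {M I : Type*} [Fintype M] [DecidableEq M] [Fintype I]
    (S : Finset (List M)) (L l k : ℕ) (g : Fin k → (↥S × I → Fin L)) : Prop :=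
  ∀ J : Finset (↥S × I), Set.InjOn Prod.snd (J : Set (↥S × I)) →
    congestionOn J (fun p => (p.1 : List M)) + dilationOn J (fun p => (p.1 : List M)) ≤ L →
    ∃ i : Fin k, IsGoodHashOn J (fun p => (p.1 : List M)) L l (g i)

lemma aux_count {M : Type*} [DecidableEq M] (s : List M) (m : M) :
    ((Finset.range s.length).filter (fun i => s[i]? = some m)).card = s.count m := by
  induction s with
  | nil => simp
  | cons a t ih =>
    rw [Finset.card_filter] at ih ⊢
    rw [List.length_cons, Finset.sum_range_succ', List.count_cons]
    simp only [List.getElem?_cons_succ, List.getElem?_cons_zero, Option.some.injEq, beq_iff_eq]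
    rw [ih]

lemma aux_occ {ι κ : Type*} [Fintype ι] [DecidableEq ι] [Fintype κ] [DecidableEq κ]
    (L : ℕ) (B : κ → Finset (ι × ℕ)) (τ : κ → ℕ)
    (hB : ∀ a b, ∀ p ∈ B a, ∀ p' ∈ B b, p.1 = p'.1 → a = b ∧ p = p') :
    (Finset.univ.filter (fun h : ι → Fin L => ∀ a, ∀ p ∈ B a, (h p.1 : ℕ) + p.2 = τ a)).card
      * L ^ (∑ a, (B a).card) ≤ L ^ (Fintype.card ι) := by
  classical
  set U : Finset ι := Finset.univ.biUnion (fun a => (B a).image Prod.fst) with hU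
  have hUc : U.card = ∑ a, (B a).card := by
    rw [hU, Finset.card_biUnion]
    · refine Finset.sum_congr rfl fun a _ => Finset.card_image_of_injOn ?_
      intro p hp q hq h
      exact (hB a a p hp q hq h).2
    · intro a _ b _ hab
      refine Finset.disjoint_left.mpr ?_
      intro x hx hy
      rw [Finset.mem_image] at hx hy
      obtain ⟨p, hp, rfl⟩ := hx
      obtain ⟨q, hq, h⟩ := hy
      exact hab (hB a b p hp q hq h.symm).1
  have h1 : (Finset.univ.filter
      (fun h : ι → Fin L => ∀ a, ∀ p ∈ B a, (h p.1 : ℕ) + p.2 = τ a)).card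
      ≤ (Finset.univ : Finset ({x // x ∉ U} → Fin L)).card := by
    refine Finset.card_le_card_of_injOn (fun h x => h x.1) (fun _ _ => by simp) ?_
    intro h hh h' hh' heq
    simp only [Finset.coe_filter, Finset.mem_univ, true_and, Set.mem_ofPred_eq] at hh hh'
    funext x
    by_cases hx : x ∈ U
    · rw [hU, Finset.mem_biUnion] at hx
      obtain ⟨a, _, hx⟩ := hx
      rw [Finset.mem_image] at hx
      obtain ⟨p, hp, rfl⟩ := hx
      have := hh a p hp
      have := hh' a p hp
      apply Fin.ext
      omega
    · exact congrFun heq ⟨x, hx⟩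
  have h2 : (Finset.univ : Finset ({x // x ∉ U} → Fin L)).card
      = L ^ (Fintype.card ι - U.card) := by
    rw [Finset.card_univ, Fintype.card_fun, Fintype.card_fin]
    congr 1
    rw [Fintype.card_subtype_compl]
    simp
  rw [h2] at h1
  calc _ ≤ L ^ (Fintype.card ι - U.card) * L ^ (∑ a, (B a).card) := Nat.mul_le_mul_right _ h1
    _ = L ^ (Fintype.card ι) := by
      rw [← hUc, ← pow_add, Nat.sub_add_cancel (Finset.card_le_univ U)]

/-- the weighted number of subsets that are empty or of size `> l` -/
lemma aux_cell {α : Type*} [DecidableEq α] (P : Finset α) (L l : ℕ) (hL0 : 0 < L) (hP : P.card ≤ L)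
    (v : ℝ) (hv : 1 ≤ v) (hvl : v * v = l) :
    ∑ A ∈ P.powerset.filter (fun A => A = ∅ ∨ l < A.card), (v / L) ^ A.card
      ≤ 1 + Real.exp l / v ^ l := by
  have hv0 : 0 < v := by linarith
  have hLr : (0:ℝ) < L := by exact_mod_cast hL0
  have h1 : ∑ A ∈ P.powerset.filter (fun A => A = ∅ ∨ l < A.card), (v / L) ^ A.card
      ≤ ∑ A ∈ P.powerset, ((if A = ∅ then 1 else 0) + ((l:ℝ) / L) ^ A.card / v ^ l) := by
    rw [Finset.sum_filter]
    refine Finset.sum_le_sum fun A _ => ?_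
    by_cases hA : A = ∅
    · subst hA
      simp
      positivity
    · simp only [hA, false_or, if_false, zero_add]
      split_ifs with h
      · rw [le_div_iff₀ (by positivity), ← hvl, mul_div_assoc, mul_pow, mul_comm]
        gcongr
      · positivity
  refine h1.trans ?_
  rw [Finset.sum_add_distrib, ← Finset.sum_div]
  have h2 := Finset.sum_pow_mul_eq_add_pow ((l:ℝ) / L) 1 P
  simp only [one_pow, mul_one] at h2
  rw [h2]
  have h3 : ((l:ℝ) / L + 1) ^ P.card ≤ Real.exp l := by
    calc ((l:ℝ) / L + 1) ^ P.card ≤ ((l:ℝ) / L + 1) ^ L := by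
          apply pow_le_pow_right₀ _ hP
          have : (0:ℝ) ≤ (l:ℝ) / L := by positivity
          linarith
      _ ≤ (Real.exp ((l:ℝ) / L)) ^ L := by
          gcongr
          exact Real.add_one_le_exp _
      _ = Real.exp l := by
          rw [← Real.exp_nat_mul]
          congr 1
          field_simp
  gcongr
  simp

lemma aux_bad {M ι : Type*} [Fintype M] [DecidableEq M] [Fintype ι] [DecidableEq ι]
    (J : Finset ι) (seq : ι → List M) (L l : ℕ) (hL0 : 0 < L)
    (hC : congestionOn J seq ≤ L)
    (y : ℝ) (hy : 1 ≤ y) (hyl : y ^ 4 = l)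
    (hs : (2 * L * Fintype.card M : ℝ) * (Real.exp l / y ^ (2 * l)) ≤ 1)
    (H : Finset (ι → Fin L)) (hH : ∀ h ∈ H, ¬ IsGoodHashOn J seq L l h) :
    (H.card : ℝ) * y ^ J.card ≤ (L : ℝ) ^ (Fintype.card ι) * Real.exp 1 := by
  classical
  have hy0 : 0 < y := by linarith
  have hLr : (0:ℝ) < L := by exact_mod_cast hL0
  set P : M → Finset (ι × ℕ) := fun m => J.biUnion (fun j =>
    ((Finset.range (seq j).length).filter (fun i => (seq j)[i]? = some m)).image
      (fun i => (j, i))) with hPdef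
  have hPc : ∀ m, (P m).card ≤ L := by
    intro m
    refine le_trans ?_ hC
    calc (P m).card ≤ ∑ j ∈ J, (seq j).count m := by
          refine Finset.card_biUnion_le.trans (Finset.sum_le_sum fun j _ => ?_)
          rw [← aux_count]
          exact Finset.card_image_le
      _ ≤ _ := Finset.le_sup (f := fun m : M => ∑ j ∈ J, (seq j).count m) (Finset.mem_univ m)
  set t : Fin (2 * L) × M → Finset (Finset (ι × ℕ)) := fun c =>
    (P c.2).powerset.filter (fun A => A = ∅ ∨ l < A.card) with ht
  set bad : Finset (Fin (2 * L) × M → Finset (ι × ℕ)) := (Fintype.piFinset t).filter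
    (fun B => IsBadPatternOn J seq L l (fun T m => B (T, m))) with hbad
  set occ : (Fin (2 * L) × M → Finset (ι × ℕ)) → Finset (ι → Fin L) := fun B =>
    Finset.univ.filter (fun h : ι → Fin L => ∀ a, ∀ p ∈ B a, (h p.1 : ℕ) + p.2 = (a.1 : ℕ))
    with hocc
  have hsub : H ⊆ bad.biUnion occ := by
    intro h hh
    have := hH h hh
    unfold IsGoodHashOn at this
    push Not at this
    obtain ⟨B, hB, hO⟩ := this
    rw [Finset.mem_biUnion]
    refine ⟨fun c => B c.1 c.2, ?_, ?_⟩
    · rw [hbad, Finset.mem_filter]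
      refine ⟨?_, hB⟩
      rw [Fintype.mem_piFinset]
      intro c
      rw [ht, Finset.mem_filter, Finset.mem_powerset]
      refine ⟨?_, hB.2.2.1 c.1 c.2⟩
      intro p hp
      obtain ⟨h1, h2⟩ := hB.1 c.1 c.2 p hp
      rw [hPdef, Finset.mem_biUnion]
      refine ⟨p.1, h1, ?_⟩
      rw [Finset.mem_image]
      refine ⟨p.2, ?_, rfl⟩
      rw [Finset.mem_filter, Finset.mem_range]
      refine ⟨?_, h2⟩
      obtain ⟨h3, _⟩ := List.getElem?_eq_some_iff.mp h2
      exact h3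
    · rw [hocc, Finset.mem_filter]
      exact ⟨Finset.mem_univ _, fun a p hp => hO a.1 a.2 p hp⟩
  have hcard : (H.card : ℝ) ≤ ∑ B ∈ bad, ((occ B).card : ℝ) := by
    have := (Finset.card_le_card hsub).trans Finset.card_biUnion_le
    exact_mod_cast this
  have hterm : ∀ B ∈ bad, ((occ B).card : ℝ) * y ^ J.card
      ≤ (L : ℝ) ^ (Fintype.card ι) * ∏ c, (y ^ 2 / L) ^ (B c).card := by
    intro B hB
    rw [hbad, Finset.mem_filter] at hB
    obtain ⟨_, hB1, hB2, hB3, hB4⟩ := hB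
    have h1 := aux_occ L B (fun a => (a.1 : ℕ)) (by
      intro a b p hp p' hp' h
      obtain ⟨e1, e2, e3⟩ := hB2 a.1 a.2 b.1 b.2 p hp p' hp' h
      exact ⟨Prod.ext e1 e2, e3⟩)
    have h1' : ((occ B).card : ℝ) * (L:ℝ) ^ (∑ a, (B a).card) ≤ (L:ℝ) ^ (Fintype.card ι) := by
      exact_mod_cast h1
    rw [Finset.prod_pow_eq_pow_sum, div_pow, ← mul_div_assoc, le_div_iff₀ (by positivity)]
    have h2 : y ^ J.card ≤ (y ^ 2) ^ (∑ a, (B a).card) := by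
      rw [← pow_mul]
      apply pow_le_pow_right₀ hy
      rw [Fintype.sum_prod_type]
      exact hB4.le
    calc _ = ((occ B).card : ℝ) * (L:ℝ) ^ (∑ a, (B a).card) * y ^ J.card := by ring
      _ ≤ _ := by gcongr
  calc (H.card : ℝ) * y ^ J.card ≤ ∑ B ∈ bad, ((occ B).card : ℝ) * y ^ J.card := by
        rw [← Finset.sum_mul]
        gcongr
    _ ≤ ∑ B ∈ bad, (L : ℝ) ^ (Fintype.card ι) * ∏ c, (y ^ 2 / L) ^ (B c).card :=
        Finset.sum_le_sum hterm
    _ ≤ ∑ B ∈ Fintype.piFinset t, (L : ℝ) ^ (Fintype.card ι) * ∏ c, (y ^ 2 / L) ^ (B c).card := by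
        apply Finset.sum_le_sum_of_subset_of_nonneg (Finset.filter_subset _ _)
        intros
        positivity
    _ = (L : ℝ) ^ (Fintype.card ι) * ∏ c, ∑ A ∈ t c, (y ^ 2 / L) ^ A.card := by
        rw [← Finset.mul_sum, Finset.prod_univ_sum]
    _ ≤ (L : ℝ) ^ (Fintype.card ι) * ∏ c : Fin (2 * L) × M, (1 + Real.exp l / (y ^ 2) ^ l) := by
        gcongr with c
        exact aux_cell (P c.2) L l hL0 (hPc c.2) (y ^ 2) (one_le_pow₀ hy) (by rw [← hyl]; ring)
    _ ≤ (L : ℝ) ^ (Fintype.card ι) * Real.exp 1 := by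
        gcongr
        rw [Finset.prod_const, Finset.card_univ, Fintype.card_prod, Fintype.card_fin, ← pow_mul]
        calc (1 + Real.exp l / y ^ (2 * l)) ^ (2 * L * Fintype.card M)
            ≤ (Real.exp (Real.exp l / y ^ (2 * l))) ^ (2 * L * Fintype.card M) := by
              gcongr
              rw [add_comm]
              exact Real.add_one_le_exp _
          _ = Real.exp ((2 * L * Fintype.card M : ℝ) * (Real.exp l / y ^ (2 * l))) := by
              rw [← Real.exp_nat_mul]
              push_cast
              rfl
          _ ≤ Real.exp 1 := Real.exp_le_exp.mpr hs

lemma aux_num (n : ℝ) (hn : 32 ≤ n) (c : ℝ) (hc : 1 ≤ c) (l : ℝ)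
    (hl : 150 * c * Real.log n / Real.log (Real.log n) ≤ l) :
    16 / 3 ≤ Real.log l ∧ 2 ≤ l ∧
      Real.log 4 + (c + 1) * Real.log n ≤ l * (Real.log l / 2 - 1) := by
  set x := Real.log n with hx
  have hx3 : 3 < x := by
    have h1 : Real.log 32 ≤ x := Real.log_le_log (by norm_num) hn
    have h2 : Real.log 32 = 5 * Real.log 2 := by
      rw [show (32:ℝ) = 2 ^ 5 by norm_num, Real.log_pow]
      norm_num
    have := Real.log_two_gt_d9
    linarith
  set u := Real.log x with hu
  have hu0 : 0 < u := Real.log_pos (by linarith)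
  have hu2 : u ≤ x / 2 := by
    have h1 := Real.log_le_sub_one_of_pos (show 0 < x / 2 by linarith)
    rw [Real.log_div (by linarith) (by norm_num)] at h1
    have := Real.log_two_lt_d9
    linarith
  have hlu : 150 * c * x ≤ l * u := by
    rwa [div_le_iff₀ hu0] at hl
  have hcx : x ≤ c * x := by nlinarith
  have hl300 : 300 ≤ l := by
    by_contra h
    push Not at h
    nlinarith
  have hlog : 16 / 3 ≤ Real.log l := by
    rw [Real.le_log_iff_exp_le (by linarith)]
    refine le_trans ?_ hl300
    have h1 : Real.exp (16 / 3) ^ 3 ≤ 300 ^ 3 := by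
      rw [← Real.exp_nat_mul]
      have : Real.exp ((3:ℕ) * (16 / 3)) = Real.exp 1 ^ 16 := by
        rw [← Real.exp_nat_mul]
        norm_num
      rw [this]
      calc Real.exp 1 ^ 16 ≤ 2.7182818286 ^ 16 := by
            gcongr
            exact Real.exp_one_lt_d9.le
        _ ≤ _ := by norm_num
    exact le_of_pow_le_pow_left₀ (by norm_num) (by norm_num) h1
  have hlu2 : u / 2 ≤ Real.log l := by
    rw [Real.le_log_iff_exp_le (by linarith)]
    have h1 : Real.exp (u / 2) * Real.exp (u / 2) = x := by
      rw [← Real.exp_add, add_halves, hu, Real.exp_log (by linarith)]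
    have h2 := Real.add_one_le_exp (u / 2)
    set w := Real.exp (u / 2)
    by_contra h
    push Not at h
    have h3 : l * u < w * (2 * w) := by nlinarith
    nlinarith
  refine ⟨hlog, by linarith, ?_⟩
  have h4 : Real.log 4 ≤ 2 := by
    have := Real.log_two_lt_d9
    rw [show (4:ℝ) = 2 ^ 2 by norm_num, Real.log_pow]
    push_cast
    linarith
  have h5 : l * (u / 8) ≤ l * (Real.log l / 2 - 1) := by
    apply mul_le_mul_of_nonneg_left _ (by linarith)
    linarith
  nlinarith

/-- Let `|M| ≥ 32`, `c ≥ 1`, `|I| = ⌊|M|^c⌋`, `S` a nonempty finite set of machine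
sequences, `L ≤ 2·|M|^c` and `l ≥ 150·c·ln|M| / ln ln|M|`. Then for
`k = ⌈16·(ln|S| + (c+1)·ln|M|) / ln(l)⌉` there exist deterministic functions
`g_1, …, g_k : S × I → {0,…,L−1}` such that the family `(g_1, …, g_k)` is `(L,l)`-good
for `S`: for every `S`-supported job set `J` with `L ≥ C(J) + D(J)`, at least one
induced function `h_i` is `(L,l)`-good for `J`. -/
theorem exists_good_family {M I : Type*} [Fintype M] [DecidableEq M] [Fintype I]
    (c : ℝ) (hc : 1 ≤ c) (hM : 32 ≤ Fintype.card M)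
    (hI : Fintype.card I = ⌊(Fintype.card M : ℝ) ^ c⌋₊)
    (S : Finset (List M)) (hS : S.Nonempty)
    (L l : ℕ) (hL0 : 0 < L) (hl0 : 0 < l)
    (hL : (L : ℝ) ≤ 2 * (Fintype.card M : ℝ) ^ c)
    (hl : 150 * c * Real.log (Fintype.card M) / Real.log (Real.log (Fintype.card M)) ≤ (l : ℝ)) :
    ∃ g : Fin ⌈16 * (Real.log (S.card : ℝ) + (c + 1) * Real.log (Fintype.card M)) /
          Real.log l⌉₊ → (↥S × I → Fin L),
      IsGoodFamily S L l _ g := by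
  classical
  set n : ℝ := (Fintype.card M : ℝ) with hn
  have hn32 : (32:ℝ) ≤ n := by rw [hn]; exact_mod_cast hM
  have hn0 : 0 < n := by linarith
  obtain ⟨hlog, hl2, hnum⟩ := aux_num n hn32 c hc l hl
  have hlr : (0:ℝ) < l := by linarith
  have hlogp : 0 < Real.log l := by linarith
  have hLr : (0:ℝ) < L := by exact_mod_cast hL0
  set k := ⌈16 * (Real.log (S.card : ℝ) + (c + 1) * Real.log n) / Real.log l⌉₊ with hk
  have hSc : (1:ℝ) ≤ (S.card : ℝ) := by exact_mod_cast hS.card_pos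
  have hlogn : 0 < Real.log n := Real.log_pos (by linarith)
  have hlogS : 0 ≤ Real.log (S.card : ℝ) := Real.log_nonneg hSc
  -- the base
  set z : ℝ := Real.exp (Real.log l / 16) with hz
  set y : ℝ := Real.exp (Real.log l / 4) with hy
  have hz0 : 0 < z := Real.exp_pos _
  have hy1 : 1 ≤ y := Real.one_le_exp (by linarith)
  have hyl : y ^ 4 = l := by
    rw [hy, ← Real.exp_nat_mul]
    push_cast
    rw [mul_div_cancel₀ _ (by norm_num), Real.exp_log hlr]
  have hyz : z * Real.exp 1 ≤ y := by
    rw [hz, hy, ← Real.exp_add]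
    apply Real.exp_le_exp.mpr
    linarith
  have hsmall : (2 * L * Fintype.card M : ℝ) * (Real.exp l / y ^ (2 * l)) ≤ 1 := by
    have e1 : Real.exp l / y ^ (2 * l) = Real.exp (-(l * (Real.log l / 2 - 1))) := by
      rw [hy, ← Real.exp_nat_mul, ← Real.exp_sub]
      congr 1
      push_cast
      ring
    have e2 : (2 * L * Fintype.card M : ℝ) ≤ Real.exp (Real.log 4 + (c + 1) * Real.log n) := by
      rw [Real.exp_add, Real.exp_log (by norm_num), mul_comm (c + 1), ← Real.rpow_def_of_pos hn0,
        Real.rpow_add hn0, Real.rpow_one, ← hn]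
      calc 2 * (L:ℝ) * n ≤ 2 * (2 * n ^ c) * n := by gcongr
        _ = _ := by ring
    rw [e1]
    calc _ ≤ Real.exp (Real.log 4 + (c + 1) * Real.log n) *
          Real.exp (-(l * (Real.log l / 2 - 1))) := by gcongr
      _ ≤ 1 := by
        rw [← Real.exp_add]
        apply Real.exp_le_one_iff.mpr
        linarith
  set W : ℝ := (L:ℝ) ^ (Fintype.card (↥S × I)) with hW
  have hW0 : 0 < W := by positivity
  set Q : ℝ := S.card * n ^ (c + 1) with hQ
  have hQ0 : 0 < Q := by positivity
  have hzk : Q ≤ z ^ k := by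
    have : 16 * (Real.log (S.card : ℝ) + (c + 1) * Real.log n) / Real.log l ≤ k := Nat.le_ceil _
    rw [div_le_iff₀ hlogp] at this
    rw [hz, ← Real.exp_nat_mul, hQ]
    calc (S.card : ℝ) * n ^ (c + 1) = Real.exp (Real.log (S.card : ℝ) + (c + 1) * Real.log n) := by
          rw [Real.exp_add, Real.exp_log (by linarith), mul_comm (c + 1),
            ← Real.rpow_def_of_pos hn0]
      _ ≤ _ := by
          apply Real.exp_le_exp.mpr
          linarith
  have hk0 : 0 < k := by
    rw [hk, Nat.ceil_pos]
    apply div_pos _ hlogp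
    have : 0 < (c + 1) * Real.log n := by positivity
    linarith
  -- bad hash functions for a job set
  set H : Finset (↥S × I) → Finset (↥S × I → Fin L) := fun J =>
    Finset.univ.filter (fun h => ¬ IsGoodHashOn J (fun p => (p.1 : List M)) L l h) with hH
  have hHJ : ∀ J : Finset (↥S × I), J.Nonempty →
      congestionOn J (fun p => (p.1 : List M)) + dilationOn J (fun p => (p.1 : List M)) ≤ L →
      ((H J).card : ℝ) ^ k ≤ W ^ k * (1 / Q) ^ J.card := by
    intro J hJ hCD
    have h1 := aux_bad J (fun p => (p.1 : List M)) L l hL0 (by omega) y hy1 hyl hsmall (H J)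
      (fun h hh => (Finset.mem_filter.mp hh).2)
    have h2 : ((H J).card : ℝ) * z ^ J.card ≤ W := by
      have h3 : z ^ J.card * Real.exp 1 ≤ y ^ J.card := by
        calc z ^ J.card * Real.exp 1 ≤ z ^ J.card * Real.exp 1 ^ J.card := by
              gcongr
              exact le_self_pow₀ (Real.one_le_exp (by norm_num)) hJ.card_pos.ne'
          _ = (z * Real.exp 1) ^ J.card := by rw [mul_pow]
          _ ≤ _ := by gcongr
      have h4 : ((H J).card : ℝ) * z ^ J.card * Real.exp 1 ≤ W * Real.exp 1 := by
        calc _ = ((H J).card : ℝ) * (z ^ J.card * Real.exp 1) := by ring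
          _ ≤ ((H J).card : ℝ) * y ^ J.card := by gcongr
          _ ≤ _ := h1
      exact le_of_mul_le_mul_right h4 (Real.exp_pos _)
    rw [one_div, inv_pow, ← div_eq_mul_inv, le_div_iff₀ (by positivity)]
    calc ((H J).card : ℝ) ^ k * Q ^ J.card ≤ ((H J).card : ℝ) ^ k * (z ^ k) ^ J.card := by gcongr
      _ = (((H J).card : ℝ) * z ^ J.card) ^ k := by ring
      _ ≤ W ^ k := by gcongr
  set V : Finset (Finset (↥S × I)) := Finset.univ.filter (fun J => J.Nonempty ∧
      congestionOn J (fun p => (p.1 : List M)) + dilationOn J (fun p => (p.1 : List M)) ≤ L) with hV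
  set G : Finset (Fin k → (↥S × I → Fin L)) :=
    V.biUnion (fun J => Fintype.piFinset (fun _ : Fin k => H J)) with hG
  have hsum : (∑ J ∈ V, (1 / Q) ^ J.card) < 1 := by
    have h1 : (∑ J ∈ V, (1 / Q) ^ J.card) + 1 ≤ ∑ J : Finset (↥S × I), (1 / Q) ^ J.card := by
      have hne : (∅ : Finset (↥S × I)) ∉ V := by simp [hV]
      have := Finset.sum_le_sum_of_subset_of_nonneg (Finset.subset_univ (insert ∅ V))
        (f := fun J : Finset (↥S × I) => (1 / Q) ^ J.card) (fun _ _ _ => by positivity)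
      rw [Finset.sum_insert hne] at this
      simp only [Finset.card_empty, pow_zero] at this
      linarith
    have h2 := Finset.sum_pow_mul_eq_add_pow (1 / Q) 1 (Finset.univ : Finset (↥S × I))
    simp only [one_pow, mul_one, Finset.powerset_univ] at h2
    rw [h2] at h1
    have h3 : (1 / Q + 1) ^ (Finset.univ : Finset (↥S × I)).card ≤ Real.exp (1 / 32) := by
      calc _ ≤ (Real.exp (1 / Q)) ^ (Finset.univ : Finset (↥S × I)).card := by
            gcongr
            exact Real.add_one_le_exp _
        _ = Real.exp ((Finset.univ : Finset (↥S × I)).card * (1 / Q)) := by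
            rw [← Real.exp_nat_mul]
        _ ≤ _ := by
            apply Real.exp_le_exp.mpr
            rw [Finset.card_univ, Fintype.card_prod, Fintype.card_coe, hI]
            push_cast
            have hf : ((⌊n ^ c⌋₊ : ℕ) : ℝ) ≤ n ^ c := Nat.floor_le (by positivity)
            rw [mul_one_div, div_le_iff₀ hQ0, hQ, Real.rpow_add hn0, Real.rpow_one]
            have hnc : 0 < n ^ c := by positivity
            calc (S.card : ℝ) * (⌊n ^ c⌋₊ : ℕ) ≤ S.card * (n ^ c * 1) := by
                  rw [mul_one]
                  gcongr
              _ ≤ S.card * (n ^ c * (n / 32)) := by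
                  gcongr
                  linarith
              _ = _ := by ring
    have h4 : Real.exp (1 / 32) < 2 := by
      rw [← Real.lt_log_iff_exp_lt (by norm_num)]
      have := Real.log_two_gt_d9
      linarith
    linarith
  have hGc : (G.card : ℝ) < ((Finset.univ : Finset (Fin k → (↥S × I → Fin L))).card : ℝ) := by
    have h1 : (G.card : ℝ) ≤ ∑ J ∈ V, ((H J).card : ℝ) ^ k := by
      have : G.card ≤ ∑ J ∈ V, (H J).card ^ k := by
        refine Finset.card_biUnion_le.trans (Finset.sum_le_sum fun J _ => ?_)
        rw [Fintype.card_piFinset]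
        simp
      exact_mod_cast this
    have h2 : ∑ J ∈ V, ((H J).card : ℝ) ^ k ≤ ∑ J ∈ V, W ^ k * (1 / Q) ^ J.card := by
      refine Finset.sum_le_sum fun J hJ => ?_
      obtain ⟨_, a, b⟩ := Finset.mem_filter.mp hJ
      exact hHJ J a b
    have h3 : ((Finset.univ : Finset (Fin k → (↥S × I → Fin L))).card : ℝ) = W ^ k := by
      rw [Finset.card_univ, Fintype.card_fun, Fintype.card_fun, Fintype.card_fin, Fintype.card_fin]
      push_cast
      rfl
    rw [h3]
    rw [← Finset.mul_sum] at h2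
    have : W ^ k * ∑ J ∈ V, (1 / Q) ^ J.card < W ^ k * 1 :=
      mul_lt_mul_of_pos_left hsum (by positivity)
    linarith
  obtain ⟨g, _, hg⟩ := Finset.exists_mem_notMem_of_card_lt_card (by exact_mod_cast hGc :
    G.card < (Finset.univ : Finset (Fin k → (↥S × I → Fin L))).card)
  refine ⟨g, ?_⟩
  intro J _ hCD
  by_contra hcon
  push Not at hcon
  apply hg
  rw [hG, Finset.mem_biUnion]
  refine ⟨J, ?_, ?_⟩
  · rw [hV, Finset.mem_filter]
    refine ⟨Finset.mem_univ _, ?_, hCD⟩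
    by_contra hJ
    rw [Finset.not_nonempty_iff_eq_empty] at hJ
    apply hcon ⟨0, hk0⟩
    intro B hB _
    obtain ⟨hB1, _, _, hB4⟩ := hB
    have : ∀ T m, B T m = ∅ := by
      intro T m
      rw [Finset.eq_empty_iff_forall_notMem]
      intro p hp
      have := (hB1 T m p hp).1
      simp [hJ] at this
    simp [this] at hB4
  · rw [Fintype.mem_piFinset]
    intro i
    rw [hH, Finset.mem_filter]
    exact ⟨Finset.mem_univ _, hcon i⟩
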